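/- Fix an r-SCB integer function w, ε ≥ 0, and ℓ ∈ {1,…,r}. Suppose p* is the largest integer in {ℓ,…,r} such that some admissible affine function g satisfies g(j) ≤ (1+ε)·w(j) for all j ∈ {ℓ,…,p*}, and let g* be an admissible function achieving this. If L̂ is an optimal linear cover of {p*+1,…,r} (the empty set when p* = r), then {g*} ∪ L̂ is an optimal linear cover of {ℓ,…,r}. -/

import Mathlib

/-- An `r`-SCB integer function. -/
def IsSCB (r : ℕ) (w : ℕ → ℝ) : Prop :=
  w 0 = 0 ∧ (∀ i, i < r → w i ≤ w (i + 1)) ∧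
    ∀ j, 1 ≤ j → j + 1 ≤ r → w (j - 1) + w (j + 1) ≤ 2 * w j

/-- Evaluation of an affine function represented as a (slope, intercept) pair. -/
def evalAff (g : ℝ × ℝ) (x : ℝ) : ℝ := g.1 * x + g.2

/-- An affine function `g(x) = m·x + d` with `m, d ≥ 0` is admissible for `w` if it upper
bounds `w` at every integer in `{0,…,r}`. -/
def Admissible (r : ℕ) (w : ℕ → ℝ) (g : ℝ × ℝ) : Prop :=
  0 ≤ g.1 ∧ 0 ≤ g.2 ∧ ∀ i ≤ r, w i ≤ evalAff g i

/-- A finite set `L` of affine functions covers `R` if every `j ∈ R` is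
`(1+ε)`-approximated by some `g ∈ L`. -/
def Covers (ε : ℝ) (w : ℕ → ℝ) (R : Finset ℕ) (L : Finset (ℝ × ℝ)) : Prop :=
  ∀ j ∈ R, ∃ g ∈ L, evalAff g j ≤ (1 + ε) * w j

/-- `L` is an optimal linear cover of `R` for `w`: all its elements are admissible, it
covers `R`, and it has minimum cardinality among all such covers. -/
def IsOptimalCover (r : ℕ) (ε : ℝ) (w : ℕ → ℝ) (R : Finset ℕ) (L : Finset (ℝ × ℝ)) : Prop :=
  (∀ g ∈ L, Admissible r w g) ∧ Covers ε w R L ∧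
    ∀ L' : Finset (ℝ × ℝ), (∀ g ∈ L', Admissible r w g) → Covers ε w R L' →
      L.card ≤ L'.card

/-!
A concave sequence minus an affine one is concave, so the integers that an affine function
approximates within `1 + ε` are consecutive. Hence an admissible function approximating `ℓ`
approximates nothing beyond `p`, and discarding the member responsible for `ℓ` from any cover of
`{ℓ,…,r}` leaves a cover of `{p+1,…,r}`.
-/

section Concave

open scoped fwdDiff

theorem min_le_of_antitoneOn_fwdDiff {G : Type*} [AddCommGroup G] [LinearOrder G]
    [IsOrderedAddMonoid G] {f : ℕ → G} {a b k : ℕ} (hf : AntitoneOn (Δ_[1] f) (Set.Ico a b))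
    (hk : k ∈ Set.Icc a b) : min (f a) (f b) ≤ f k := by
  obtain ⟨hak, hkb⟩ := hk
  obtain rfl | hkb := hkb.eq_or_lt
  · exact min_le_right _ _
  obtain hinc | hdec := le_total 0 (Δ_[1] f k)
  · have hmono : MonotoneOn f (Set.Icc a k) :=
      monotoneOn_of_le_add_one Set.ordConnected_Icc fun i _ hi hi' ↦
        sub_nonneg.1 <| hinc.trans <| hf ⟨hi.1, hi.2.trans_lt hkb⟩ ⟨hak, hkb⟩ hi.2
    exact min_le_of_left_le <| hmono ⟨le_rfl, hak⟩ ⟨hak, le_rfl⟩ hak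
  · have hanti : AntitoneOn f (Set.Icc k b) :=
      antitoneOn_of_add_one_le Set.ordConnected_Icc fun i _ hi hi' ↦
        sub_nonpos.1 <| (hf ⟨hak, hkb⟩ ⟨hak.trans hi.1, hi'.2⟩ hi.1).trans hdec
    exact min_le_of_right_le <| hanti ⟨le_rfl, hkb.le⟩ ⟨hkb.le, le_rfl⟩ hkb.le

theorem fwdDiff_const_mul_sub_evalAff (c : ℝ) (w : ℕ → ℝ) (g : ℝ × ℝ) (i : ℕ) :
    Δ_[1] (fun j : ℕ ↦ c * w j - evalAff g j) i = c * Δ_[1] w i - g.1 := by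
  simp only [fwdDiff, evalAff, Nat.cast_add, Nat.cast_one]
  ring

theorem evalAff_le_const_mul_of_mem_Icc {c : ℝ} (hc : 0 ≤ c) {w : ℕ → ℝ} {a b k : ℕ}
    (hw : AntitoneOn (Δ_[1] w) (Set.Ico a b)) {g : ℝ × ℝ} (ha : evalAff g a ≤ c * w a)
    (hb : evalAff g b ≤ c * w b) (hk : k ∈ Set.Icc a b) : evalAff g k ≤ c * w k := by
  have hgap : AntitoneOn (Δ_[1] fun j : ℕ ↦ c * w j - evalAff g j) (Set.Ico a b) := by
    intro i hi j hj hij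
    simp only [fwdDiff_const_mul_sub_evalAff]
    gcongr
    exact hw hi hj hij
  exact sub_nonneg.1 <|
    (le_min (sub_nonneg.2 ha) (sub_nonneg.2 hb)).trans (min_le_of_antitoneOn_fwdDiff hgap hk)

theorem IsSCB.antitoneOn_fwdDiff {r : ℕ} {w : ℕ → ℝ} (hw : IsSCB r w) :
    AntitoneOn (Δ_[1] w) (Set.Iio r) := by
  refine antitoneOn_of_add_one_le Set.ordConnected_Iio fun i _ _ hi ↦ ?_
  have hconcave : w i + w (i + 1 + 1) ≤ 2 * w (i + 1) := hw.2.2 (i + 1) (Nat.succ_pos i) hi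
  simp only [fwdDiff]
  linarith

end Concave

section Cover

variable {r : ℕ} {ε : ℝ} {w : ℕ → ℝ} {R S : Finset ℕ} {L : Finset (ℝ × ℝ)} {g : ℝ × ℝ}

theorem Covers.mono (hL : Covers ε w S L) (hRS : R ⊆ S) : Covers ε w R L :=
  fun j hj ↦ hL j (hRS hj)

theorem Covers.union_insert (hg : ∀ j ∈ S, evalAff g j ≤ (1 + ε) * w j) (hL : Covers ε w R L) :
    Covers ε w (S ∪ R) (insert g L) := by
  intro j hj
  obtain hjS | hjR := Finset.mem_union.1 hj
  · exact ⟨g, Finset.mem_insert_self g L, hg j hjS⟩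
  · obtain ⟨h, hhL, hhj⟩ := hL j hjR
    exact ⟨h, Finset.mem_insert_of_mem hhL, hhj⟩

theorem Covers.erase (hL : Covers ε w R L) (hg : ∀ j ∈ R, ¬ evalAff g j ≤ (1 + ε) * w j) :
    Covers ε w R (L.erase g) := by
  intro j hj
  obtain ⟨h, hhL, hhj⟩ := hL j hj
  exact ⟨h, Finset.mem_erase.2 ⟨fun hhg ↦ hg j hj (hhg ▸ hhj), hhL⟩, hhj⟩

theorem IsOptimalCover.union_insert (hL : IsOptimalCover r ε w R L) (hg : Admissible r w g)
    (hgS : ∀ j ∈ S, evalAff g j ≤ (1 + ε) * w j) {s : ℕ} (hs : s ∈ S)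
    (hsep : ∀ h, Admissible r w h → evalAff h s ≤ (1 + ε) * w s →
      ∀ j ∈ R, ¬ evalAff h j ≤ (1 + ε) * w j) :
    IsOptimalCover r ε w (S ∪ R) (insert g L) := by
  obtain ⟨hadm, hcov, hmin⟩ := hL
  refine ⟨(Finset.forall_mem_insert ..).2 ⟨hg, hadm⟩, hcov.union_insert hgS, ?_⟩
  intro L' hadm' hcov'
  obtain ⟨h, hhL', hhs⟩ := hcov' s (Finset.mem_union_left R hs)
  have hcov_erase : Covers ε w R (L'.erase h) :=
    (hcov'.mono Finset.subset_union_right).erase (hsep h (hadm' h hhL') hhs)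
  calc (insert g L).card ≤ L.card + 1 := Finset.card_insert_le g L
    _ ≤ (L'.erase h).card + 1 := Nat.add_le_add_right
      (hmin _ (fun x hx ↦ hadm' x (Finset.mem_of_mem_erase hx)) hcov_erase) 1
    _ = L'.card := Finset.card_erase_add_one hhL'

end Cover

open scoped fwdDiff in
theorem greedy_cover_optimal_general
    (r : ℕ) (ε : ℝ) (hε : 0 ≤ ε) (w : ℕ → ℝ) (ℓ p : ℕ)
    (hw : AntitoneOn (Δ_[1] w) (Set.Ico ℓ r)) (hℓp : ℓ ≤ p) (hpr : p ≤ r)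
    (gstar : ℝ × ℝ) (hgadm : Admissible r w gstar)
    (hgcov : ∀ j ∈ Finset.Icc ℓ p, evalAff gstar j ≤ (1 + ε) * w j)
    (hmax : ∀ p', ℓ ≤ p' → p' ≤ r →
      (∃ g, Admissible r w g ∧ ∀ j ∈ Finset.Icc ℓ p', evalAff g j ≤ (1 + ε) * w j) →
      p' ≤ p)
    (Lhat : Finset (ℝ × ℝ))
    (hLhat : IsOptimalCover r ε w (Finset.Icc (p + 1) r) Lhat) :
    IsOptimalCover r ε w (Finset.Icc ℓ r) (insert gstar Lhat) := by
  have hsplit : Finset.Icc ℓ r = Finset.Icc ℓ p ∪ Finset.Icc (p + 1) r := by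
    ext j
    simp only [Finset.mem_union, Finset.mem_Icc]
    omega
  rw [hsplit]
  refine hLhat.union_insert hgadm hgcov (Finset.left_mem_Icc.2 hℓp) fun g hg hgℓ j hj hgj ↦ ?_
  obtain ⟨hpj, hjr⟩ := Finset.mem_Icc.1 hj
  have hjp : j ≤ p := hmax j (by omega) hjr ⟨g, hg, fun k hk ↦
    evalAff_le_const_mul_of_mem_Icc (by positivity) (hw.mono (Set.Ico_subset_Ico_right hjr))
      hgℓ hgj (Finset.mem_Icc.1 hk)⟩
  omega

/-- **Greedy choice yields an optimal linear cover (Lemma 3.3).** Fix an `r`-SCB integer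
function `w`, `ε ≥ 0`, and `ℓ ∈ {1,…,r}`. Suppose `p` is the largest integer in `{ℓ,…,r}`
such that some admissible affine function `(1+ε)`-covers all of `{ℓ,…,p}`, with `gstar`
achieving this maximum. If `Lhat` is an optimal linear cover of `{p+1,…,r}`, then
`{gstar} ∪ Lhat` is an optimal linear cover of `{ℓ,…,r}`. -/
theorem greedy_cover_optimal
    (r : ℕ) (ε : ℝ) (hε : 0 ≤ ε) (w : ℕ → ℝ) (hw : IsSCB r w)
    (ℓ p : ℕ) (hℓ : 1 ≤ ℓ) (hℓp : ℓ ≤ p) (hpr : p ≤ r)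
    (gstar : ℝ × ℝ) (hgadm : Admissible r w gstar)
    (hgcov : ∀ j ∈ Finset.Icc ℓ p, evalAff gstar j ≤ (1 + ε) * w j)
    (hmax : ∀ p', ℓ ≤ p' → p' ≤ r →
      (∃ g, Admissible r w g ∧ ∀ j ∈ Finset.Icc ℓ p', evalAff g j ≤ (1 + ε) * w j) →
      p' ≤ p)
    (Lhat : Finset (ℝ × ℝ))
    (hLhat : IsOptimalCover r ε w (Finset.Icc (p + 1) r) Lhat) :
    IsOptimalCover r ε w (Finset.Icc ℓ r) (insert gstar Lhat) :=
  greedy_cover_optimal_general r ε hε w ℓ p (hw.antitoneOn_fwdDiff.mono Set.Ico_subset_Iio_self)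
    hℓp hpr gstar hgadm hgcov hmax Lhat hLhat
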